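/- Let u : A → B be a morphism of noetherian rings, M a finitely generated A-module, and N a finitely generated B-module which is flat as an A-module. Consider M ⊗_A N as a B-module. If M is an almost Cohen-Macaulay A-module and for every P ∈ Supp(M) the fiber module N_P/PN_P is a Cohen-Macaulay B_P/PB_P-module, then M ⊗_A N is an almost Cohen-Macaulay B-module. -/

import Mathlib

noncomputable section

open TensorProduct

universe u v w





/-- The depth of the ideal `I` on the module `M`: the supremum of lengths of
`M`-regular sequences with entries in `I`. -/
noncomputable def idealDepth (A : Type u) [CommRing A] (I : Ideal A)
    (M : Type v) [AddCommGroup M] [Module A M] : ℕ∞ :=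
  sSup {n : ℕ∞ | ∃ rs : List A, (rs.length : ℕ∞) = n ∧ (∀ r ∈ rs, r ∈ I) ∧
    RingTheory.Sequence.IsRegular M rs}

/-- The depth of a module over a local ring. -/
noncomputable def localDepth (A : Type u) [CommRing A] [IsLocalRing A]
    (M : Type v) [AddCommGroup M] [Module A M] : ℕ∞ :=
  idealDepth A (IsLocalRing.maximalIdeal A) M

/-- The (Krull) dimension of a module, i.e. the Krull dimension of its support. -/
noncomputable def supportDim (A : Type u) [CommRing A]
    (M : Type v) [AddCommGroup M] [Module A M] : WithBot ℕ∞ :=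
  Order.krullDim (Module.support A M)

/-- `depth (M_P)` : the depth of the localization of `M` at a prime `P`,
over the local ring `A_P`. -/
noncomputable def depthAt (A : Type u) [CommRing A]
    (M : Type v) [AddCommGroup M] [Module A M] (P : PrimeSpectrum A) : ℕ∞ :=
  localDepth (Localization.AtPrime P.asIdeal) (LocalizedModule P.asIdeal.primeCompl M)

/-- `ht_M(P) = dim (M_P)` : the height of a prime `P` in the support of `M`,
i.e. the dimension of the localized module `M_P` over `A_P`. -/
noncomputable def heightAt (A : Type u) [CommRing A]
    (M : Type v) [AddCommGroup M] [Module A M] (P : PrimeSpectrum A) : WithBot ℕ∞ :=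
  supportDim (Localization.AtPrime P.asIdeal) (LocalizedModule P.asIdeal.primeCompl M)

/-- Serre's condition `(S_n)` for a module: for every `P` in the support,
`depth (M_P) ≥ min (n, ht_M(P))`. -/
def SerreCondS (A : Type u) [CommRing A] (n : ℕ)
    (M : Type v) [AddCommGroup M] [Module A M] : Prop :=
  ∀ P ∈ Module.support A M,
    min (n : WithBot ℕ∞) (heightAt A M P) ≤ (depthAt A M P : WithBot ℕ∞)

/-- The condition `(C_n)` for a module: for every `P` in the support,
`depth (M_P) ≥ min (n, ht_M(P)) - 1`, equivalently
`min (n, ht_M(P)) ≤ depth (M_P) + 1`. -/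
def CondC (A : Type u) [CommRing A] (n : ℕ)
    (M : Type v) [AddCommGroup M] [Module A M] : Prop :=
  ∀ P ∈ Module.support A M,
    min (n : WithBot ℕ∞) (heightAt A M P) ≤ (depthAt A M P : WithBot ℕ∞) + 1

/-- A module `M` is almost Cohen-Macaulay if `depth(P, M) = depth (M_P)` for every
`P` in the support of `M` (Kang's definition). -/
def IsAlmostCMModule (A : Type u) [CommRing A]
    (M : Type v) [AddCommGroup M] [Module A M] : Prop :=
  ∀ P ∈ Module.support A M, idealDepth A P.asIdeal M = depthAt A M P

/-- A module `M` is Cohen-Macaulay if `depth (M_P) = dim (M_P)` for every `P` in its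
support. -/
def IsCMModule (A : Type u) [CommRing A]
    (M : Type v) [AddCommGroup M] [Module A M] : Prop :=
  ∀ P ∈ Module.support A M, (depthAt A M P : WithBot ℕ∞) = heightAt A M P

/-- A ring is almost Cohen-Macaulay if it is an almost Cohen-Macaulay module over
itself. -/
abbrev IsAlmostCMRing (A : Type u) [CommRing A] : Prop := IsAlmostCMModule A A

/-- A ring is Cohen-Macaulay if it is a Cohen-Macaulay module over itself, i.e. all its
localizations at primes have depth equal to dimension. -/
abbrev IsCMRing (A : Type u) [CommRing A] : Prop := IsCMModule A A

/-- A ring satisfies `(C_n)` if it does so as a module over itself. -/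
abbrev RingCondC (A : Type u) [CommRing A] (n : ℕ) : Prop := CondC A n A

/-- A ring satisfies `(S_n)` if it does so as a module over itself. -/
abbrev RingSerreCondS (A : Type u) [CommRing A] (n : ℕ) : Prop := SerreCondS A n A






variable (A : Type u) [CommRing A] (B : Type u) [CommRing B] [Algebra A B]

/-- The image in `B` of the complement of a prime `P` of `A`, as a submonoid of `B`. -/
noncomputable def fiberSubmonoid (P : PrimeSpectrum A) : Submonoid B :=
  Submonoid.map (algebraMap A B) P.asIdeal.primeCompl

/-- `PB_P` : the extension of the prime `P` of `A` to the localization `B_P` of `B`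
at (the image of) the complement of `P`. -/
noncomputable def fiberIdeal (P : PrimeSpectrum A) :
    Ideal (Localization (fiberSubmonoid A B P)) :=
  Ideal.map ((algebraMap B (Localization (fiberSubmonoid A B P))).comp (algebraMap A B))
    P.asIdeal

/-- The fiber ring `B_P / P B_P` of `A → B` at a prime `P` of `A`. -/
noncomputable def fiberRing (P : PrimeSpectrum A) : Type u :=
  Localization (fiberSubmonoid A B P) ⧸ fiberIdeal A B P

noncomputable instance (P : PrimeSpectrum A) : CommRing (fiberRing A B P) :=
  inferInstanceAs (CommRing (Localization (fiberSubmonoid A B P) ⧸ fiberIdeal A B P))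

/-- The fiber module `N_P / P N_P` of a `B`-module `N` at a prime `P` of `A`. -/
noncomputable def fiberModule (P : PrimeSpectrum A)
    (N : Type u) [AddCommGroup N] [Module B N] : Type u :=
  LocalizedModule (fiberSubmonoid A B P) N ⧸
    (fiberIdeal A B P •
      (⊤ : Submodule (Localization (fiberSubmonoid A B P))
        (LocalizedModule (fiberSubmonoid A B P) N)))

noncomputable instance (P : PrimeSpectrum A) (N : Type u) [AddCommGroup N] [Module B N] :
    AddCommGroup (fiberModule A B P N) :=
  inferInstanceAs (AddCommGroup (LocalizedModule (fiberSubmonoid A B P) N ⧸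
    (fiberIdeal A B P •
      (⊤ : Submodule (Localization (fiberSubmonoid A B P))
        (LocalizedModule (fiberSubmonoid A B P) N)))))

/-- `N_P / P N_P` is a module over the fiber ring `B_P / P B_P`. -/
noncomputable instance (P : PrimeSpectrum A) (N : Type u) [AddCommGroup N] [Module B N] :
    Module (fiberRing A B P) (fiberModule A B P N) :=
  inferInstanceAs (Module (Localization (fiberSubmonoid A B P) ⧸ fiberIdeal A B P)
    (LocalizedModule (fiberSubmonoid A B P) N ⧸
      (fiberIdeal A B P •
        (⊤ : Submodule (Localization (fiberSubmonoid A B P))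
          (LocalizedModule (fiberSubmonoid A B P) N)))))








/-- The canonical `B`-module structure on `M ⊗[A] N`, where `N` is a `B`-module,
given by `b • (m ⊗ n) = m ⊗ (b • n)`. -/
noncomputable instance tensorRightModule (A : Type u) [CommRing A] (B : Type u) [CommRing B]
    [Algebra A B] (M : Type u) [AddCommGroup M] [Module A M]
    (N : Type u) [AddCommGroup N] [Module A N] [Module B N] [IsScalarTower A B N] :
    Module B (M ⊗[A] N) where
  smul b x := (TensorProduct.comm A M N).symm (b • TensorProduct.comm A M N x)
  one_smul x := by
    show (TensorProduct.comm A M N).symm ((1 : B) • TensorProduct.comm A M N x) = x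
    simp
  mul_smul a b x := by
    show (TensorProduct.comm A M N).symm ((a * b) • TensorProduct.comm A M N x) =
      (TensorProduct.comm A M N).symm (a • TensorProduct.comm A M N
        ((TensorProduct.comm A M N).symm (b • TensorProduct.comm A M N x)))
    simp [mul_smul]
  smul_zero b := by
    show (TensorProduct.comm A M N).symm (b • TensorProduct.comm A M N 0) = 0
    simp
  smul_add b x y := by
    show (TensorProduct.comm A M N).symm (b • TensorProduct.comm A M N (x + y)) =
      (TensorProduct.comm A M N).symm (b • TensorProduct.comm A M N x) +
      (TensorProduct.comm A M N).symm (b • TensorProduct.comm A M N y)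
    simp
  add_smul a b x := by
    show (TensorProduct.comm A M N).symm ((a + b) • TensorProduct.comm A M N x) =
      (TensorProduct.comm A M N).symm (a • TensorProduct.comm A M N x) +
      (TensorProduct.comm A M N).symm (b • TensorProduct.comm A M N x)
    simp [add_smul]
  zero_smul x := by
    show (TensorProduct.comm A M N).symm ((0 : B) • TensorProduct.comm A M N x) = 0
    simp

/-!
`M` is almost Cohen-Macaulay exactly when `dim M_P ≤ depth M_P + 1` for all `P` in its support.
Let `Q` be in the support of `M ⊗ N`, let `P` be its contraction to `A`, and let `F = N / PN`.
The dimension inequality gives `dim (M ⊗ N)_Q ≤ dim M_P + dim F_Q`, where `dim F_Q = depth F_Q`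
because the fibre is Cohen-Macaulay. An `M`-regular sequence in `P` stays regular on `(M ⊗ N)_Q`
by flatness, and an `F_Q`-regular sequence is regular on `L ⊗ N_Q` for every finite `A`-module
`L`; concatenating the two gives `depth(P, M) + depth F_Q ≤ depth (M ⊗ N)_Q`, and
`depth(P, M) = depth M_P` since `M` is almost Cohen-Macaulay.
-/

section IdealDepth

open RingTheory.Sequence Pointwise

variable {R : Type u} [CommRing R] {I J : Ideal R} {X : Type v} [AddCommGroup X] [Module R X]
  {rs : List R}

theorem isRegular_of_smul_top_ne_top (hI : I • (⊤ : Submodule R X) ≠ ⊤) (hmem : ∀ r ∈ rs, r ∈ I)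
    (hreg : IsWeaklyRegular X rs) : IsRegular X rs :=
  ⟨hreg, fun h ↦ hI <| top_le_iff.mp <|
    h.le.trans (Submodule.smul_mono_left (Ideal.span_le.mpr hmem))⟩

theorem natCast_le_idealDepth_iff (hI : I • (⊤ : Submodule R X) ≠ ⊤) {n : ℕ} :
    (n : ℕ∞) ≤ idealDepth R I X ↔
      ∃ rs : List R, rs.length = n ∧ (∀ r ∈ rs, r ∈ I) ∧ IsWeaklyRegular X rs := by
  constructor
  · intro h
    obtain _ | k := n
    · exact ⟨[], by simp⟩
    · obtain ⟨_, ⟨rs, rfl, hmem, hreg⟩, hlt⟩ :=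
        lt_sSup_iff.mp ((Nat.cast_lt.mpr k.lt_succ_self).trans_le h)
      have hlen : k + 1 ≤ rs.length := by exact_mod_cast hlt
      have hweak := hreg.toIsWeaklyRegular
      rw [← List.take_append_drop (k + 1) rs, isWeaklyRegular_append_iff] at hweak
      exact ⟨rs.take (k + 1), by simpa using hlen,
        fun r hr ↦ hmem r (List.mem_of_mem_take hr), hweak.1⟩
  · rintro ⟨rs, rfl, hmem, hreg⟩
    exact le_sSup ⟨rs, rfl, hmem, isRegular_of_smul_top_ne_top hI hmem hreg⟩

theorem idealDepth_mono (h : I ≤ J) : idealDepth R I X ≤ idealDepth R J X :=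
  sSup_le_sSup fun _ ⟨rs, hlen, hmem, hreg⟩ ↦ ⟨rs, hlen, fun r hr ↦ h (hmem r hr), hreg⟩

theorem idealDepth_congr {Y : Type w} [AddCommGroup Y] [Module R Y] (e : X ≃ₗ[R] Y) (I : Ideal R) :
    idealDepth R I X = idealDepth R I Y := by
  simp only [idealDepth, e.isRegular_congr]

theorem smul_top_ne_top_of_mem_support [Module.Finite R X] {P : PrimeSpectrum R}
    (hP : P ∈ Module.support R X) : P.asIdeal • (⊤ : Submodule R X) ≠ ⊤ := by
  intro h
  obtain ⟨r, hr, hr0⟩ := Submodule.exists_sub_one_mem_and_smul_eq_zero_of_fg_of_le_smul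
    P.asIdeal (⊤ : Submodule R X) Module.Finite.fg_top h.ge
  rw [Module.mem_support_iff_of_finite] at hP
  have hrP : r ∈ P.asIdeal := hP (Module.mem_annihilator.mpr fun x ↦ hr0 x trivial)
  exact P.2.ne_top ((Ideal.eq_top_iff_one _).mpr (by simpa using sub_mem hrP hr))

theorem smul_top_ne_top_of_isLocalRing [IsLocalRing R] [Module.Finite R X] [Nontrivial X] :
    IsLocalRing.maximalIdeal R • (⊤ : Submodule R X) ≠ ⊤ :=
  (Submodule.top_ne_ideal_smul_of_le_jacobson_annihilator
    (IsLocalRing.maximalIdeal_le_jacobson _)).symm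

theorem smul_top_quotSMulTop_ne_top {x : R} (hx : x ∈ I) (hI : I • (⊤ : Submodule R X) ≠ ⊤) :
    I • (⊤ : Submodule R (QuotSMulTop x X)) ≠ ⊤ := by
  intro h
  refine hI (top_le_iff.mp ?_)
  have hcomap := congrArg (Submodule.comap (x • (⊤ : Submodule R X)).mkQ) h
  rw [Submodule.comap_smul_top_of_surjective I _ (Submodule.mkQ_surjective _), Submodule.ker_mkQ,
    Submodule.comap_top, ← Submodule.ideal_span_singleton_smul] at hcomap
  exact hcomap.ge.trans (sup_le le_rfl
    (Submodule.smul_mono_left ((Ideal.span_singleton_le_iff_mem I).mpr hx)))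

theorem idealDepth_eq_zero_iff [IsNoetherianRing R] [Module.Finite R X]
    (hI : I • (⊤ : Submodule R X) ≠ ⊤) :
    idealDepth R I X = 0 ↔ ∃ p ∈ associatedPrimes R X, I ≤ p := by
  have hpos : idealDepth R I X ≠ 0 ↔ ∃ r ∈ I, IsSMulRegular X r := by
    rw [← Order.one_le_iff_pos.trans pos_iff_ne_zero, ← Nat.cast_one (R := ℕ∞),
      natCast_le_idealDepth_iff hI]
    simp [List.length_eq_one_iff]
  have havoid : (I : Set R) ⊆ ⋃ p ∈ associatedPrimes R X, (p : Set R) ↔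
      ∃ p ∈ associatedPrimes R X, I ≤ p :=
    Ideal.subset_union_prime_finite (associatedPrimes.finite R X) 0 0 fun p hp _ _ ↦ hp.1
  rw [← not_iff_not, ← ne_eq, hpos, ← havoid, biUnion_associatedPrimes_eq_compl_regular,
    Set.not_subset]
  simp

section Rees

open CategoryTheory Abelian

theorem natCast_le_idealDepth_quotSMulTop [Small.{v} R] [IsNoetherianRing R] [Module.Finite R X]
    (hI : I • (⊤ : Submodule R X) ≠ ⊤) {x : R} (hx : x ∈ I) (hreg : IsSMulRegular X x) {n : ℕ}
    (hn : ((n + 1 : ℕ) : ℕ∞) ≤ idealDepth R I X) :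
    (n : ℕ∞) ≤ idealDepth R I (QuotSMulTop x X) := by
  have hI' := smul_top_quotSMulTop_ne_top hx hI
  obtain ⟨rs, hlen, hmem, hrs⟩ := (natCast_le_idealDepth_iff hI).mp hn
  have rees := (ModuleCat.exists_isRegular_tfae I (n + 1) (ModuleCat.of R X) hI.lt_top).out 3 1
  have hExt := rees.mp ⟨rs, hlen, hmem, isRegular_of_smul_top_ne_top hI hmem hrs⟩
  have rees' :=
    (ModuleCat.exists_isRegular_tfae I n (ModuleCat.of R (QuotSMulTop x X)) hI'.lt_top).out 3 1
  obtain ⟨ts, hlen', hmem', hts⟩ := rees'.mpr fun i hi ↦ by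
      have hzero := AddCommGrpCat.isZero_of_iff_subsingleton.mpr (hExt i (by lia))
      have hzero' := AddCommGrpCat.isZero_of_iff_subsingleton.mpr (hExt (i + 1) (by lia))
      exact AddCommGrpCat.subsingleton_of_isZero <| ShortComplex.Exact.isZero_of_both_zeros
        (Ext.covariant_sequence_exact₃' _
          (IsSMulRegular.smulShortComplex_shortExact (M := ModuleCat.of R X) hreg) i (i + 1) rfl)
        (hzero.eq_zero_of_src _) (hzero'.eq_zero_of_tgt _)
  exact (natCast_le_idealDepth_iff hI').mpr ⟨ts, hlen', hmem', hts.toIsWeaklyRegular⟩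

end Rees

variable [Small.{v} R] [IsNoetherianRing R] [Module.Finite R X]

theorem idealDepth_quotSMulTop_add_one (hI : I • (⊤ : Submodule R X) ≠ ⊤) {x : R} (hx : x ∈ I)
    (hreg : IsSMulRegular X x) : idealDepth R I (QuotSMulTop x X) + 1 = idealDepth R I X := by
  refine le_antisymm (ENat.forall_natCast_le_iff_le.mp fun n hn ↦ ?_)
    (ENat.forall_natCast_le_iff_le.mp fun n hn ↦ ?_) <;> obtain _ | n := n
  · exact zero_le
  · rw [Nat.cast_succ, ENat.add_le_add_iff_right ENat.one_ne_top,
      natCast_le_idealDepth_iff (smul_top_quotSMulTop_ne_top hx hI)] at hn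
    obtain ⟨rs, hlen, hmem, hrs⟩ := hn
    exact (natCast_le_idealDepth_iff hI).mpr
      ⟨x :: rs, by simp [hlen], by simpa using ⟨hx, hmem⟩, hrs.cons hreg⟩
  · exact zero_le
  · rw [Nat.cast_succ, ENat.add_le_add_iff_right ENat.one_ne_top]
    exact natCast_le_idealDepth_quotSMulTop hI hx hreg hn

theorem idealDepth_quotient_ofList_add_length (hI : I • (⊤ : Submodule R X) ≠ ⊤)
    (hmem : ∀ r ∈ rs, r ∈ I) (hreg : IsWeaklyRegular X rs) :
    idealDepth R I (X ⧸ (Ideal.ofList rs • ⊤ : Submodule R X)) + rs.length =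
      idealDepth R I X := by
  induction rs generalizing X with
  | nil =>
    rw [idealDepth_congr (Submodule.quotEquivOfEqBot _ (by simp))]
    simp
  | cons r rs ih =>
    rw [isWeaklyRegular_cons_iff] at hreg
    rw [List.forall_mem_cons] at hmem
    rw [idealDepth_congr (Submodule.quotOfListConsSMulTopEquivQuotSMulTopInner X r rs),
      List.length_cons, Nat.cast_succ, ← add_assoc,
      ih (smul_top_quotSMulTop_ne_top hmem.1 hI) hmem.2 hreg.2,
      idealDepth_quotSMulTop_add_one hI hmem.1 hreg.1]

theorem exists_isWeaklyRegular_idealDepth_quotient_eq_zero (hI : I • (⊤ : Submodule R X) ≠ ⊤)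
    (hfin : idealDepth R I X ≠ ⊤) :
    ∃ rs : List R, rs.length = idealDepth R I X ∧ (∀ r ∈ rs, r ∈ I) ∧ IsWeaklyRegular X rs ∧
      idealDepth R I (X ⧸ (Ideal.ofList rs • ⊤ : Submodule R X)) = 0 := by
  obtain ⟨d, hd⟩ := ENat.ne_top_iff_exists.mp hfin
  obtain ⟨rs, hlen, hmem, hreg⟩ := (natCast_le_idealDepth_iff hI).mp hd.le
  refine ⟨rs, by rw [hlen, hd], hmem, hreg, ?_⟩
  have h := idealDepth_quotient_ofList_add_length hI hmem hreg
  rw [← hd, hlen] at h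
  exact ENat.add_left_injective_of_ne_top (ENat.natCast_ne_top d) (h.trans (zero_add _).symm)

end IdealDepth

section DepthAt

open RingTheory.Sequence Module.associatedPrimes

variable {R : Type u} [CommRing R] {X : Type v} [AddCommGroup X] [Module R X]
  {P : PrimeSpectrum R} {rs : List R}

/-- Localization of modules commutes with the quotient by the multiples of an ideal. -/
def localizedModuleQuotientEquiv (X : Type v) [AddCommGroup X] [Module R X] (T : Submonoid R)
    (I : Ideal R) :
    LocalizedModule T (X ⧸ (I • ⊤ : Submodule R X)) ≃ₗ[Localization T]
      LocalizedModule T X ⧸ (I.map (algebraMap R (Localization T)) •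
        (⊤ : Submodule (Localization T) (LocalizedModule T X))) :=
  (localizedQuotientEquiv _ _).symm ≪≫ₗ
    Submodule.quotEquivOfEq _ _ (by rw [Submodule.localized,
      Submodule.localized'_smul, Ideal.localized'_eq_map, Submodule.localized'_top])

theorem depthAt_congr {Y : Type w} [AddCommGroup Y] [Module R Y] (e : X ≃ₗ[R] Y)
    (P : PrimeSpectrum R) : depthAt R X P = depthAt R Y P :=
  idealDepth_congr (IsLocalizedModule.mapEquiv P.asIdeal.primeCompl
    (LocalizedModule.mkLinearMap _ X) (LocalizedModule.mkLinearMap _ Y) _ e) _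

theorem forall_mem_map_algebraMap_mem_maximalIdeal (hmem : ∀ r ∈ rs, r ∈ P.asIdeal) :
    ∀ r ∈ rs.map (algebraMap R (Localization.AtPrime P.asIdeal)),
      r ∈ IsLocalRing.maximalIdeal (Localization.AtPrime P.asIdeal) := by
  rw [List.forall_mem_map]
  exact fun r hr ↦ (IsLocalization.AtPrime.to_map_mem_maximal_iff _ P.asIdeal r).mpr (hmem r hr)

theorem isWeaklyRegular_localizedModule (T : Submonoid R) (hreg : IsWeaklyRegular X rs) :
    IsWeaklyRegular (LocalizedModule T X) (rs.map (algebraMap R (Localization T))) :=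
  hreg.of_isLocalizedModule _ T (LocalizedModule.mkLinearMap T X)

variable [Module.Finite R X]

theorem smul_top_localizedModule_ne_top_of_mem_support (hP : P ∈ Module.support R X) :
    IsLocalRing.maximalIdeal (Localization.AtPrime P.asIdeal) •
      (⊤ : Submodule (Localization.AtPrime P.asIdeal)
        (LocalizedModule P.asIdeal.primeCompl X)) ≠ ⊤ :=
  have : Nontrivial (LocalizedModule P.asIdeal.primeCompl X) := hP
  smul_top_ne_top_of_isLocalRing

theorem natCast_le_depthAt_iff (hP : P ∈ Module.support R X) {n : ℕ} :
    (n : ℕ∞) ≤ depthAt R X P ↔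
      ∃ rs : List (Localization.AtPrime P.asIdeal), rs.length = n ∧
        (∀ r ∈ rs, r ∈ IsLocalRing.maximalIdeal (Localization.AtPrime P.asIdeal)) ∧
        IsWeaklyRegular (LocalizedModule P.asIdeal.primeCompl X) rs :=
  natCast_le_idealDepth_iff (smul_top_localizedModule_ne_top_of_mem_support hP)

theorem idealDepth_le_depthAt (hP : P ∈ Module.support R X) :
    idealDepth R P.asIdeal X ≤ depthAt R X P := by
  refine sSup_le ?_
  rintro _ ⟨rs, rfl, hmem, hreg⟩
  exact (natCast_le_depthAt_iff hP).mpr ⟨_, List.length_map _,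
    forall_mem_map_algebraMap_mem_maximalIdeal hmem,
    isWeaklyRegular_localizedModule _ hreg.toIsWeaklyRegular⟩

variable [IsNoetherianRing R]

theorem coe_depthAt_le_heightAt (hP : P ∈ Module.support R X) :
    (depthAt R X P : WithBot ℕ∞) ≤ heightAt R X P := by
  have : Nontrivial (LocalizedModule P.asIdeal.primeCompl X) := hP
  obtain ⟨c, hc⟩ := WithBot.ne_bot_iff_exists.mp (Module.supportDim_ne_bot_of_nontrivial
    (Localization.AtPrime P.asIdeal) (LocalizedModule P.asIdeal.primeCompl X))
  refine (WithBot.coe_le_coe.mpr (sSup_le ?_)).trans hc.le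
  rintro _ ⟨rs, rfl, -, hreg⟩
  have := hreg.quot_ofList_smul_nontrivial ⊤
  rw [← WithBot.coe_le_coe, hc, ← Module.supportDim_add_length_eq_supportDim_of_isRegular rs hreg]
  have := (Module.nonempty_support_iff (R := Localization.AtPrime P.asIdeal)).mpr this
  exact le_add_of_nonneg_left (have := this.to_subtype; Order.krullDim_nonneg)

theorem heightAt_quotient_ofList_add_length (hP : P ∈ Module.support R X)
    (hmem : ∀ r ∈ rs, r ∈ P.asIdeal) (hreg : IsWeaklyRegular X rs) :
    heightAt R (X ⧸ (Ideal.ofList rs • ⊤ : Submodule R X)) P + rs.length = heightAt R X P := by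
  have hdim := Module.supportDim_add_length_eq_supportDim_of_isRegular _
    (isRegular_of_smul_top_ne_top (smul_top_localizedModule_ne_top_of_mem_support hP)
      (forall_mem_map_algebraMap_mem_maximalIdeal hmem) (isWeaklyRegular_localizedModule _ hreg))
  rwa [← Ideal.map_ofList, List.length_map, ← Module.supportDim_eq_of_equiv
    (localizedModuleQuotientEquiv X P.asIdeal.primeCompl (Ideal.ofList rs))] at hdim

theorem depthAt_quotient_ofList_add_length (hP : P ∈ Module.support R X)
    (hmem : ∀ r ∈ rs, r ∈ P.asIdeal) (hreg : IsWeaklyRegular X rs) :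
    depthAt R (X ⧸ (Ideal.ofList rs • ⊤ : Submodule R X)) P + rs.length = depthAt R X P := by
  have hdepth := idealDepth_quotient_ofList_add_length
    (smul_top_localizedModule_ne_top_of_mem_support hP)
    (forall_mem_map_algebraMap_mem_maximalIdeal hmem) (isWeaklyRegular_localizedModule _ hreg)
  rwa [← Ideal.map_ofList, List.length_map, ← idealDepth_congr
    (localizedModuleQuotientEquiv X P.asIdeal.primeCompl (Ideal.ofList rs))] at hdepth

theorem depthAt_eq_zero_iff (hP : P ∈ Module.support R X) :
    depthAt R X P = 0 ↔ P.asIdeal ∈ associatedPrimes R X := by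
  refine (idealDepth_eq_zero_iff (smul_top_localizedModule_ne_top_of_mem_support hP)).trans
    ⟨fun ⟨p, hp, hle⟩ ↦ ?_, fun h ↦ ⟨_,
      mem_associatedPrimes_atPrime_of_mem_associatedPrimes h, le_rfl⟩⟩
  rw [← hle.antisymm (IsLocalRing.le_maximalIdeal hp.1.ne_top)] at hp
  have hcomap :=
    comap_mem_associatedPrimes_of_mem_associatedPrimes_of_isLocalizedModule_of_fg
      P.asIdeal.primeCompl (LocalizedModule.mkLinearMap P.asIdeal.primeCompl X) _ hp
      (IsNoetherian.noetherian _)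
  exact IsLocalization.AtPrime.under_maximalIdeal
    (Localization.AtPrime P.asIdeal) P.asIdeal ▸ hcomap

theorem heightAt_ne_top (X : Type v) [AddCommGroup X] [Module R X] (P : PrimeSpectrum R) :
    heightAt R X P ≠ ⊤ :=
  ne_top_of_le_ne_top ringKrullDim_lt_top.ne (Module.supportDim_le_ringKrullDim
    (Localization.AtPrime P.asIdeal) (LocalizedModule P.asIdeal.primeCompl X))

theorem depthAt_ne_top (hP : P ∈ Module.support R X) : depthAt R X P ≠ ⊤ := by
  intro h
  have hle := coe_depthAt_le_heightAt hP
  rw [h] at hle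
  exact heightAt_ne_top X P (top_le_iff.mp hle)

theorem exists_le_depthAt_eq_idealDepth [Small.{v} R] (hP : P ∈ Module.support R X) :
    ∃ P', P ≤ P' ∧ depthAt R X P' = idealDepth R P.asIdeal X := by
  have hI := smul_top_ne_top_of_mem_support hP
  obtain ⟨rs, hlen, hmem, hreg, hzero⟩ := exists_isWeaklyRegular_idealDepth_quotient_eq_zero hI
    (ne_top_of_le_ne_top (depthAt_ne_top hP) (idealDepth_le_depthAt hP))
  let Y := X ⧸ (Ideal.ofList rs • ⊤ : Submodule R X)
  have hPY : P ∈ Module.support R Y := by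
    rw [Module.support_quotient]
    exact ⟨hP, Ideal.span_le.mpr hmem⟩
  obtain ⟨p, hp, hle⟩ := (idealDepth_eq_zero_iff (smul_top_ne_top_of_mem_support hPY)).mp hzero
  let P' : PrimeSpectrum R := ⟨p, hp.1⟩
  have hPP' : P ≤ P' := hle
  refine ⟨P', hPP', ?_⟩
  rw [← depthAt_quotient_ofList_add_length (Module.mem_support_mono hPP' hP)
    (fun r hr ↦ hle (hmem r hr)) hreg,
    (depthAt_eq_zero_iff (Module.mem_support_mono hPP' hPY)).mpr hp, zero_add, hlen]

end DepthAt

section Height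

variable {R : Type u} [CommRing R] {X : Type v} [AddCommGroup X] [Module R X]

theorem mem_support_localizedModule_iff {T : Submonoid R} (q : PrimeSpectrum (Localization T)) :
    q ∈ Module.support (Localization T) (LocalizedModule T X) ↔
      PrimeSpectrum.comap (algebraMap R (Localization T)) q ∈ Module.support R X := by
  rw [Module.mem_support_iff', Module.mem_support_iff']
  constructor
  · rintro ⟨m, hm⟩
    induction m using LocalizedModule.induction_on with
    | h x s =>
      refine ⟨x, fun r hr hrx ↦ hm (algebraMap R _ r) hr ?_⟩
      rw [algebraMap_smul, LocalizedModule.smul'_mk, hrx, LocalizedModule.zero_mk]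
  · rintro ⟨x, hx⟩
    refine ⟨LocalizedModule.mk x 1, fun r hr h0 ↦ ?_⟩
    obtain ⟨a, s, rfl⟩ := IsLocalization.exists_mk'_eq T r
    rw [← Localization.mk_eq_mk', LocalizedModule.mk_smul_mk, ← LocalizedModule.zero_mk 1,
      LocalizedModule.mk_eq] at h0
    obtain ⟨t, ht⟩ := h0
    refine hx (t * a) (fun hmem ↦ hr ?_) (by simpa [mul_smul, Submonoid.smul_def] using ht)
    have ha : algebraMap R (Localization T) a ∈ q.asIdeal :=
      (q.2.mem_or_mem (by rwa [← map_mul])).resolve_left fun ht' ↦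
        q.2.ne_top (Ideal.eq_top_of_isUnit_mem _ ht' (IsLocalization.map_units _ t))
    rw [IsLocalization.mk'_eq_mul_mk'_one]
    exact q.asIdeal.mul_mem_right _ ha

theorem heightAt_eq_height {P : PrimeSpectrum R} (hP : P ∈ Module.support R X) :
    heightAt R X P = (Order.height (⟨P, hP⟩ : Module.support R X) : ℕ∞) := by
  rw [Order.height_eq_krullDim_Iic]
  let e := IsLocalization.AtPrime.primeSpectrumOrderIso (Localization.AtPrime P.asIdeal) P.asIdeal
  refine Order.krullDim_eq_of_orderIso
    { toFun := fun q ↦ ⟨⟨(e q.1).1, (mem_support_localizedModule_iff q.1).mp q.2⟩, (e q.1).2⟩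
      invFun := fun p ↦ ⟨e.symm ⟨p.1.1, p.2⟩, (mem_support_localizedModule_iff _).mpr ?_⟩
      left_inv := fun q ↦ Subtype.ext (e.symm_apply_apply q.1)
      right_inv := fun p ↦ Subtype.ext (Subtype.ext (by simp))
      map_rel_iff' := e.map_rel_iff }
  have hp : (e (e.symm ⟨p.1.1, p.2⟩)).1 ∈ Module.support R X := by
    rw [e.apply_symm_apply]
    exact p.1.2
  exact hp

theorem heightAt_add_one_le {P P' : PrimeSpectrum R} (hP : P ∈ Module.support R X)
    (hlt : P < P') : heightAt R X P + 1 ≤ heightAt R X P' := by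
  have hP' := Module.mem_support_mono hlt.le hP
  have hlt' : (⟨P, hP⟩ : Module.support R X) < ⟨P', hP'⟩ := hlt
  rw [heightAt_eq_height hP, heightAt_eq_height hP']
  exact_mod_cast Order.height_add_one_le hlt'

variable [IsNoetherianRing R]

theorem notMem_minimalPrimes_sup_span_singleton {p₀ p₁ p : Ideal R} [p₀.IsPrime] [p₁.IsPrime]
    (h₀ : p₀ < p₁) (h₁ : p₁ < p) (a : R) : p ∉ (p₀ ⊔ Ideal.span {a}).minimalPrimes := by
  intro hp
  have hprime : p.IsPrime := hp.1.1
  let π := Ideal.Quotient.mk p₀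
  have map_isPrime {q : Ideal R} [q.IsPrime] (hq : p₀ ≤ q) : (q.map π).IsPrime :=
    Ideal.map_isPrime_of_surjective Ideal.Quotient.mk_surjective (Ideal.mk_ker.trans_le hq)
  have map_lt_map {q r : Ideal R} (hq : p₀ ≤ q) (hlt : q < r) : q.map π < r.map π :=
    (Ideal.map_mono hlt.le).lt_of_ne fun h ↦ hlt.ne <| by
      rw [← Ideal.comap_map_mk hq, ← Ideal.comap_map_mk (hq.trans hlt.le)]
      exact congrArg _ h
  have := map_isPrime le_rfl
  have := map_isPrime h₀.le
  have := map_isPrime (h₀.trans h₁).le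
  have hchain : (1 : ℕ∞) + 1 ≤ 1 := calc
    (1 : ℕ∞) + 1 ≤ (p₀.map π).height + 1 + 1 := by gcongr; exact le_add_self
    _ ≤ (p₁.map π).height + 1 := by
      gcongr
      exact Ideal.height_add_one_le_of_lt_of_isPrime (map_lt_map le_rfl h₀)
    _ ≤ (p.map π).height := Ideal.height_add_one_le_of_lt_of_isPrime (map_lt_map h₀.le h₁)
    _ ≤ 1 := Ideal.map_height_le_one_of_mem_minimalPrimes hp
  exact absurd hchain (by decide)

theorem exists_lt_lt_notMem_of_finite {p₀ p₁ p : PrimeSpectrum R} (h₀ : p₀ < p₁) (h₁ : p₁ < p)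
    {s : Set (PrimeSpectrum R)} (hs : s.Finite) : ∃ q ∉ s, p₀ < q ∧ q < p := by
  let t : Set (PrimeSpectrum R) := {q ∈ s | q < p} ∪ {p₀}
  have ht : t.Finite := (hs.sep _).union (Set.finite_singleton _)
  have hlt : ∀ q ∈ t, q < p := by
    rintro q (hq | rfl)
    exacts [hq.2, h₀.trans h₁]
  obtain ⟨a, hap, ha⟩ : ∃ a ∈ p.asIdeal, ∀ q ∈ t, a ∉ q.asIdeal := by
    have havoid : ¬ (p.asIdeal : Set R) ⊆ ⋃ q ∈ t, (q.asIdeal : Set R) := by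
      rw [Ideal.subset_union_prime_finite ht p₀ p₀ fun q _ _ _ ↦ q.2]
      rintro ⟨q, hq, hle⟩
      exact (hlt q hq).not_ge hle
    simpa [Set.not_subset] using havoid
  obtain ⟨q, hq, hqp⟩ := Ideal.exists_minimalPrimes_le
    (sup_le (h₀.trans h₁).le ((Ideal.span_singleton_le_iff_mem _).mpr hap))
  have haq : a ∈ q := hq.1.2 (Ideal.mem_sup_right (Ideal.mem_span_singleton_self a))
  have hq_ne : q ≠ p.asIdeal := by
    rintro rfl
    exact notMem_minimalPrimes_sup_span_singleton (p₁ := p₁.asIdeal) h₀ h₁ a hq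
  have hqp' : (⟨q, hq.1.1⟩ : PrimeSpectrum R) < p := hqp.lt_of_ne hq_ne
  have hp₀q : p₀.asIdeal ≤ q := le_sup_left.trans hq.1.2
  exact ⟨⟨q, hq.1.1⟩, fun h ↦ ha _ (Or.inl ⟨h, hqp'⟩) haq,
    hp₀q.lt_of_ne fun h ↦ ha p₀ (Or.inr rfl) (h ▸ haq), hqp'⟩

variable [Module.Finite R X]

theorem exists_mem_support_lt_notMem_associatedPrimes {P : PrimeSpectrum R}
    (hP : P ∈ Module.support R X) (h : 1 < heightAt R X P) :
    ∃ Q ∈ Module.support R X, Q < P ∧ Q.asIdeal ∉ associatedPrimes R X := by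
  rw [heightAt_eq_height hP, ← WithBot.coe_one, WithBot.coe_lt_coe, Order.one_lt_height_iff] at h
  obtain ⟨q₁, q₀, h₀, h₁⟩ := h
  obtain ⟨Q, hQ, hlt, hlt'⟩ := exists_lt_lt_notMem_of_finite (p₁ := q₁.1) h₀ h₁
    ((associatedPrimes.finite R X).preimage (fun _ _ _ _ ↦ PrimeSpectrum.ext))
  exact ⟨Q, Module.mem_support_mono hlt.le q₀.2, hlt', hQ⟩

variable [Small.{v} R]

theorem IsAlmostCMModule.heightAt_le (h : IsAlmostCMModule R X) {P : PrimeSpectrum R}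
    (hP : P ∈ Module.support R X) : heightAt R X P ≤ (depthAt R X P : WithBot ℕ∞) + 1 := by
  -- Modulo a maximal regular sequence in `P`, height at least two would give a prime `Q < P` of
  -- the support that is not associated; then `depth(P, X) < depth X_Q = depth(Q, X)`.
  have hfin : idealDepth R P.asIdeal X ≠ ⊤ := h P hP ▸ depthAt_ne_top hP
  obtain ⟨rs, hlen, hmem, hreg, -⟩ := exists_isWeaklyRegular_idealDepth_quotient_eq_zero
    (smul_top_ne_top_of_mem_support hP) hfin
  let Y := X ⧸ (Ideal.ofList rs • ⊤ : Submodule R X)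
  have hsupp : Module.support R Y =
      Module.support R X ∩ PrimeSpectrum.zeroLocus (Ideal.ofList rs) := Module.support_quotient _
  have hheight : heightAt R Y P ≤ 1 := by
    by_contra! hlt
    obtain ⟨Q, hQY, hQP, hQ⟩ := exists_mem_support_lt_notMem_associatedPrimes
      (hsupp ▸ ⟨hP, Ideal.span_le.mpr hmem⟩) hlt
    have hQX : Q ∈ Module.support R X := (hsupp ▸ hQY).1
    have hmemQ : ∀ r ∈ rs, r ∈ Q.asIdeal := fun r hr ↦ (hsupp ▸ hQY).2 (Ideal.subset_span hr)
    have hlt : idealDepth R P.asIdeal X < idealDepth R Q.asIdeal X := by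
      rw [h Q hQX, ← depthAt_quotient_ofList_add_length hQX hmemQ hreg, hlen]
      exact ENat.lt_add_left hfin (pos_iff_ne_zero.mpr <| (depthAt_eq_zero_iff hQY).not.mpr hQ)
    exact hlt.not_ge (idealDepth_mono hQP.le)
  rw [← heightAt_quotient_ofList_add_length hP hmem hreg, ← h P hP, ← hlen, add_comm]
  exact add_le_add_right hheight _

theorem isAlmostCMModule_iff_heightAt_le :
    IsAlmostCMModule R X ↔
      ∀ P ∈ Module.support R X, heightAt R X P ≤ (depthAt R X P : WithBot ℕ∞) + 1 := by
  refine ⟨fun h P hP ↦ h.heightAt_le hP, fun h P hP ↦ (idealDepth_le_depthAt hP).antisymm ?_⟩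
  obtain ⟨P', hle, hdepth⟩ := exists_le_depthAt_eq_idealDepth hP
  rw [← hdepth]
  obtain rfl | hlt := hle.eq_or_lt
  · rfl
  · have hsucc : (depthAt R X P : WithBot ℕ∞) + 1 ≤ depthAt R X P' + 1 := calc
      (depthAt R X P : WithBot ℕ∞) + 1 ≤ heightAt R X P + 1 := by
        gcongr
        exact coe_depthAt_le_heightAt hP
      _ ≤ heightAt R X P' := heightAt_add_one_le hP hlt
      _ ≤ depthAt R X P' + 1 := h P' (Module.mem_support_mono hlt.le hP)
    exact (ENat.add_le_add_iff_right ENat.one_ne_top).mp (by exact_mod_cast hsucc)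

end Height

section DimensionInequality

open PrimeSpectrum

variable {R : Type u} [CommRing R] {S : Type v} [CommRing S]

section Surjective

variable {f : R →+* S} {X : Type w} [AddCommGroup X] [Module R X]

theorem heightAt_comap_le_height (hf : Function.Surjective f)
    (hX : Module.support R X ⊆ zeroLocus (RingHom.ker f)) {q : PrimeSpectrum S}
    (hq : comap f q ∈ Module.support R X) :
    heightAt R X (comap f q) ≤ (q.asIdeal.height : WithBot ℕ∞) := by
  rw [← range_comap_of_surjective _ f hf] at hX
  choose g hg using fun p : Module.support R X ↦ hX p.2
  have hle (p p' : Module.support R X) : g p ≤ g p' ↔ p ≤ p' := by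
    rw [← Subtype.coe_le_coe, ← hg p, ← hg p']
    exact (Ideal.comap_le_comap_iff_of_surjective f hf _ _).symm
  have hmono : StrictMono g := fun p p' ↦ (lt_iff_lt_of_le_iff_le' (hle _ _) (hle _ _)).mpr
  have hgq : g ⟨_, hq⟩ = q := comap_injective_of_surjective f hf (hg ⟨_, hq⟩)
  rw [heightAt_eq_height hq, ← congrArg (·.asIdeal.height) hgq, height_eq_orderHeight]
  exact_mod_cast Order.height_le_height_apply_of_strictMono g hmono _

theorem height_le_heightAt_comap (hf : Function.Surjective f)
    (hX : zeroLocus (RingHom.ker f) ⊆ Module.support R X) (q : PrimeSpectrum S) :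
    (q.asIdeal.height : WithBot ℕ∞) ≤ heightAt R X (comap f q) := by
  rw [← range_comap_of_surjective _ f hf] at hX
  rw [heightAt_eq_height (hX ⟨q, rfl⟩), height_eq_orderHeight]
  exact_mod_cast Order.height_le_height_apply_of_strictMono
    (fun q' : PrimeSpectrum S ↦ (⟨comap f q', hX ⟨q', rfl⟩⟩ : Module.support R X))
    (fun _ _ h ↦ RingHom.strictMono_comap_of_surjective hf h) q

end Surjective

variable [Algebra R S] {M : Type*} [AddCommGroup M] [Module R M]
  {N : Type*} [AddCommGroup N] [Module S N] [Module.Finite S N]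

theorem height_le_heightAt_add_heightAt {R' S' : Type*} [CommRing R'] [IsNoetherianRing R']
    [CommRing S'] [IsNoetherianRing S'] [Algebra R' S'] {f : R →+* R'} {g : S →+* S'}
    (hf : Function.Surjective f) (hg : Function.Surjective g)
    (hfg : (algebraMap R' S').comp f = g.comp (algebraMap R S))
    (hM : zeroLocus (RingHom.ker f) ⊆ Module.support R M)
    (hN : zeroLocus (RingHom.ker g) ⊆ Module.support S N) (Q : PrimeSpectrum S') :
    (Q.asIdeal.height : WithBot ℕ∞) ≤
      heightAt R M (comap (algebraMap R S) (comap g Q)) +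
        heightAt S (N ⧸ ((comap (algebraMap R S) (comap g Q)).asIdeal.map (algebraMap R S) • ⊤ :
          Submodule S N)) (comap g Q) := by
  let P := comap (algebraMap R' S') Q
  have hPQ : comap (algebraMap R S) (comap g Q) = comap f P := by
    rw [← comap_comp_apply, ← hfg, comap_comp_apply]
  have : Q.asIdeal.LiesOver P.asIdeal := ⟨rfl⟩
  let K := P.asIdeal.map (algebraMap R' S')
  obtain ⟨q, hq⟩ : Q ∈ Set.range (comap (Ideal.Quotient.mk K)) := by
    rw [range_comap_of_surjective _ _ Ideal.Quotient.mk_surjective, Ideal.mk_ker]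
    exact Ideal.map_comap_le
  have hfibre : (q.asIdeal.height : WithBot ℕ∞) ≤
      heightAt S (N ⧸ ((comap f P).asIdeal.map (algebraMap R S) • ⊤ : Submodule S N))
        (comap g Q) := by
    have hcomp : comap g Q = comap ((Ideal.Quotient.mk K).comp g) q := by
      rw [comap_comp_apply, hq]
    have hsurj : Function.Surjective ((Ideal.Quotient.mk K).comp g) :=
      Ideal.Quotient.mk_surjective.comp hg
    rw [hcomp]
    refine height_le_heightAt_comap hsurj ?_ q
    rw [Module.support_quotient]
    refine Set.subset_inter (.trans (zeroLocus_anti_mono_ideal ?_) hN)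
      (zeroLocus_anti_mono_ideal (Ideal.map_le_iff_le_comap.mpr fun r hr ↦ ?_))
    · exact fun s hs ↦ by simp [(RingHom.mem_ker).mp hs]
    · have hr' : g (algebraMap R S r) = algebraMap R' S' (f r) := (RingHom.congr_fun hfg r).symm
      rw [Ideal.mem_comap, RingHom.mem_ker, RingHom.comp_apply, hr', Ideal.Quotient.eq_zero_iff_mem]
      exact Ideal.mem_map_of_mem _ hr
  have hQq : Q.asIdeal.map (Ideal.Quotient.mk K) = q.asIdeal := by
    rw [← hq, comap_asIdeal, Ideal.map_comap_of_surjective _ Ideal.Quotient.mk_surjective]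
  have hheight : Q.asIdeal.height ≤ P.asIdeal.height + q.asIdeal.height :=
    hQq ▸ Ideal.height_le_height_add_of_liesOver P.asIdeal Q.asIdeal
  rw [hPQ]
  calc (Q.asIdeal.height : WithBot ℕ∞) ≤ P.asIdeal.height + q.asIdeal.height := by
        exact_mod_cast hheight
    _ ≤ _ := add_le_add (height_le_heightAt_comap hf hM P) hfibre

theorem heightAt_le_heightAt_add_heightAt [IsNoetherianRing R] [IsNoetherianRing S]
    [Module.Finite R M] {X : Type*} [AddCommGroup X] [Module S X]
    (hX : Module.support S X ⊆ Module.support S N ∩ comap (algebraMap R S) ⁻¹' Module.support R M)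
    {Q : PrimeSpectrum S} (hQ : Q ∈ Module.support S X) {P : PrimeSpectrum R}
    (hQP : comap (algebraMap R S) Q = P) :
    heightAt S X Q ≤ heightAt R M P +
      heightAt S (N ⧸ (P.asIdeal.map (algebraMap R S) • ⊤ : Submodule S N)) Q := by
  subst hQP
  let I := Module.annihilator R M
  let J := Module.annihilator S N ⊔ I.map (algebraMap R S)
  let φ : R ⧸ I →+* S ⧸ J :=
    Ideal.quotientMap J (algebraMap R S) (Ideal.map_le_iff_le_comap.mp le_sup_right)
  let _ : Algebra (R ⧸ I) (S ⧸ J) := φ.toAlgebra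
  have hXJ : Module.support S X ⊆ zeroLocus (RingHom.ker (Ideal.Quotient.mk J)) := by
    rw [Module.support_eq_zeroLocus (M := N), Module.support_eq_zeroLocus (M := M)] at hX
    rw [Ideal.mk_ker]
    intro q hq
    have hJq : J ≤ q.asIdeal := sup_le (hX hq).1 (Ideal.map_le_iff_le_comap.mpr (hX hq).2)
    exact hJq
  obtain ⟨q, rfl⟩ : Q ∈ Set.range (comap (Ideal.Quotient.mk J)) := by
    rw [range_comap_of_surjective _ _ Ideal.Quotient.mk_surjective]
    exact hXJ hQ
  refine (heightAt_comap_le_height Ideal.Quotient.mk_surjective hXJ hQ).trans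
    (height_le_heightAt_add_heightAt (f := Ideal.Quotient.mk I) (g := Ideal.Quotient.mk J)
      Ideal.Quotient.mk_surjective Ideal.Quotient.mk_surjective rfl ?_ ?_ q)
  · rw [Ideal.mk_ker, Module.support_eq_zeroLocus]
  · rw [Ideal.mk_ker, Module.support_eq_zeroLocus]
    exact zeroLocus_anti_mono_ideal le_sup_left

end DimensionInequality

section Transport

open RingTheory.Sequence

variable {R : Type*} [CommRing R] {S : Type*} [CommRing S] {X : Type*} [AddCommGroup X]
  [Module R X] {Y : Type*} [AddCommGroup Y] [Module S Y] {f : R →+* S} {e : X ≃+ Y}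

theorem ker_le_of_mem_support_of_addEquiv (he : ∀ r x, e (r • x) = f r • e x)
    {p : PrimeSpectrum R} (hp : p ∈ Module.support R X) : RingHom.ker f ≤ p.asIdeal := by
  intro r hr
  obtain ⟨x, hx⟩ := Module.mem_support_iff'.mp hp
  by_contra hrp
  refine hx r hrp (e.injective ?_)
  rw [he, (RingHom.mem_ker).mp hr, zero_smul, map_zero]

theorem mem_support_of_comap_mem_support_of_addEquiv (hf : Function.Surjective f)
    (he : ∀ r x, e (r • x) = f r • e x) {q : PrimeSpectrum S}
    (hq : PrimeSpectrum.comap f q ∈ Module.support R X) : q ∈ Module.support S Y := by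
  obtain ⟨x, hx⟩ := Module.mem_support_iff'.mp hq
  refine Module.mem_support_iff'.mpr ⟨e x, fun s hs hsx ↦ ?_⟩
  obtain ⟨r, rfl⟩ := hf s
  rw [← he, map_eq_zero_iff e e.injective] at hsx
  exact hx r hs hsx

theorem supportDim_le_of_surjective_of_addEquiv (hf : Function.Surjective f)
    (he : ∀ r x, e (r • x) = f r • e x) : Module.supportDim R X ≤ Module.supportDim S Y := by
  have hrange (p : Module.support R X) : p.1 ∈ Set.range (PrimeSpectrum.comap f) := by
    rw [range_comap_of_surjective _ f hf]
    exact ker_le_of_mem_support_of_addEquiv he p.2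
  choose g hg using hrange
  refine Order.krullDim_le_of_strictMono (fun p ↦ ⟨g p,
    mem_support_of_comap_mem_support_of_addEquiv hf he ((hg p).symm ▸ p.2)⟩) fun p p' hlt ↦ ?_
  rw [← Subtype.coe_lt_coe, ← hg p, ← hg p'] at hlt
  exact lt_of_le_not_ge ((Ideal.comap_le_comap_iff_of_surjective f hf _ _).mp hlt.le)
    fun h ↦ hlt.not_ge (Ideal.comap_mono h)

theorem exists_isWeaklyRegular_of_surjective_of_addEquiv [IsLocalRing R] [IsLocalRing S]
    (hf : Function.Surjective f) (he : ∀ r x, e (r • x) = f r • e x) {ss : List S}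
    (hmem : ∀ s ∈ ss, s ∈ IsLocalRing.maximalIdeal S) (hreg : IsWeaklyRegular Y ss) :
    ∃ rs : List R, rs.length = ss.length ∧ (∀ r ∈ rs, r ∈ IsLocalRing.maximalIdeal R) ∧
      IsWeaklyRegular X rs := by
  obtain ⟨rs, rfl⟩ := List.map_surjective_iff.mpr hf ss
  refine ⟨rs, (List.length_map _).symm, fun r hr hu ↦ ?_, ?_⟩
  · exact hmem (f r) (List.mem_map_of_mem hr) (hu.map f)
  · refine (AddEquiv.isWeaklyRegular_congr (e := e) ?_).mpr hreg
    exact List.forall₂_map_right_iff.mpr (List.forall₂_same.mpr fun r _ x ↦ he r x)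

end Transport

section LocalizationTransport

theorem isLocalizedModule_of_le_of_exists_mul_mem {R : Type*} [CommRing R] {F G : Type*}
    [AddCommGroup F] [AddCommGroup G] [Module R F] [Module R G] {S T : Submonoid R} (hST : S ≤ T)
    (hT : ∀ t ∈ T, ∃ r, r * t ∈ S) (φ : F →ₗ[R] G) [IsLocalizedModule T φ] :
    IsLocalizedModule S φ where
  map_units s := IsLocalizedModule.map_units φ (⟨s, hST s.2⟩ : T)
  surj y := by
    obtain ⟨⟨x, t⟩, hxt⟩ := IsLocalizedModule.surj T φ y
    obtain ⟨r, hr⟩ := hT t t.2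
    refine ⟨⟨r • x, ⟨r * t, hr⟩⟩, ?_⟩
    rw [map_smul, ← hxt, Submonoid.smul_def, Submonoid.smul_def, mul_smul]
  exists_of_eq {x y} hxy := by
    obtain ⟨t, ht⟩ := IsLocalizedModule.exists_of_eq (S := T) hxy
    obtain ⟨r, hr⟩ := hT t t.2
    refine ⟨⟨r * t, hr⟩, ?_⟩
    simpa only [Submonoid.smul_def, mul_smul] using congrArg (r • ·) ht

variable {R : Type u} [CommRing R] {C : Type v} [CommRing C] [Algebra R C]
  {Q : PrimeSpectrum R} {q : PrimeSpectrum C}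

theorem isLocalizedModule_restrictScalars_mkLinearMap
    (hC : ∀ c : C, ∃ b t : R, IsUnit (algebraMap R C t) ∧ algebraMap R C t * c = algebraMap R C b)
    (G : Type*) [AddCommGroup G] [Module R G] [Module C G] [IsScalarTower R C G]
    (hQ : Q.asIdeal = q.asIdeal.comap (algebraMap R C)) :
    IsLocalizedModule Q.asIdeal.primeCompl
      ((LocalizedModule.mkLinearMap q.asIdeal.primeCompl G).restrictScalars R) := by
  have hmem (r : R) : r ∈ Q.asIdeal.primeCompl ↔ algebraMap R C r ∈ q.asIdeal.primeCompl := by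
    simp only [Ideal.mem_primeCompl_iff, hQ, Ideal.mem_comap]
  have hle : Algebra.algebraMapSubmonoid C Q.asIdeal.primeCompl ≤ q.asIdeal.primeCompl :=
    Submonoid.map_le_iff_le_comap.mpr fun r ↦ (hmem r).mp
  have := isLocalizedModule_of_le_of_exists_mul_mem hle (fun c hc ↦ ?_)
    (LocalizedModule.mkLinearMap q.asIdeal.primeCompl G)
  · exact IsLocalizedModule.restrictScalars Q.asIdeal.primeCompl
      (LocalizedModule.mkLinearMap q.asIdeal.primeCompl G)
  · obtain ⟨b, t, ht, hb⟩ := hC c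
    refine ⟨algebraMap R C t, b, (hmem b).mpr ?_, hb.symm⟩
    rwa [← hb, Ideal.mem_primeCompl_iff, Ideal.unit_mul_mem_iff_mem _ ht]

theorem map_smul_eq_localRingHom_smul (hQ : Q.asIdeal = q.asIdeal.comap (algebraMap R C))
    {X : Type*} [AddCommGroup X] [Module R X] [Module (Localization.AtPrime Q.asIdeal) X]
    [IsScalarTower R (Localization.AtPrime Q.asIdeal) X]
    {Y : Type*} [AddCommGroup Y] [Module R Y] [Module C Y]
    [Module (Localization.AtPrime q.asIdeal) Y] [IsScalarTower R C Y]
    [IsScalarTower C (Localization.AtPrime q.asIdeal) Y] (e : X →ₗ[R] Y)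
    (r : Localization.AtPrime Q.asIdeal) (x : X) :
    e (r • x) = Localization.localRingHom _ _ (algebraMap R C) hQ r • e x := by
  let f := Localization.localRingHom _ _ (algebraMap R C) hQ
  have hf (a : R) (y : Y) : f (algebraMap R _ a) • y = a • y := by
    rw [Localization.localRingHom_to_map, algebraMap_smul, algebraMap_smul]
  obtain ⟨a, s, rfl⟩ := IsLocalization.exists_mk'_eq Q.asIdeal.primeCompl r
  have hs : IsUnit (f (algebraMap R _ s)) := (IsLocalization.map_units _ s).map f
  refine hs.smul_left_cancel.mp ?_
  rw [← mul_smul, ← map_mul, IsLocalization.mk'_spec', hf, hf, ← map_smul, ← map_smul,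
    ← algebraMap_smul (Localization.AtPrime Q.asIdeal) (s : R), ← mul_smul,
    IsLocalization.mk'_spec', algebraMap_smul]

variable {F : Type w} [AddCommGroup F] [Module R F] {G : Type*} [AddCommGroup G] [Module R G]
  [Module C G] [IsScalarTower R C G] {T : Submonoid R}

theorem exists_addEquiv_localizedModule
    (hC : ∀ c : C, ∃ b t : R, IsUnit (algebraMap R C t) ∧ algebraMap R C t * c = algebraMap R C b)
    (hT : ∀ t ∈ T, IsUnit (algebraMap R C t)) (φ : F →ₗ[R] G) [IsLocalizedModule T φ]
    (hQ : Q.asIdeal = q.asIdeal.comap (algebraMap R C)) :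
    ∃ e : LocalizedModule Q.asIdeal.primeCompl F ≃+ LocalizedModule q.asIdeal.primeCompl G,
      ∀ r x, e (r • x) = Localization.localRingHom _ _ (algebraMap R C) hQ r • e x := by
  have hTQ : T ≤ Q.asIdeal.primeCompl := fun t ht h ↦
    q.2.ne_top (Ideal.eq_top_of_isUnit_mem _ (Ideal.mem_comap.mp (hQ ▸ h)) (hT t ht))
  have := isLocalizedModule_restrictScalars_mkLinearMap hC G hQ
  let e := IsLocalizedModule.linearEquiv Q.asIdeal.primeCompl
    (IsLocalizedModule.liftOfLE T _ hTQ φ (LocalizedModule.mkLinearMap Q.asIdeal.primeCompl F))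
    ((LocalizedModule.mkLinearMap q.asIdeal.primeCompl G).restrictScalars R)
  exact ⟨e.toAddEquiv, map_smul_eq_localRingHom_smul hQ e.toLinearMap⟩

theorem IsCMModule.heightAt_le_depthAt_of_isLocalizedModule (hG : IsCMModule C G)
    (hC : ∀ c : C, ∃ b t : R, IsUnit (algebraMap R C t) ∧ algebraMap R C t * c = algebraMap R C b)
    (hT : ∀ t ∈ T, IsUnit (algebraMap R C t)) (φ : F →ₗ[R] G) [IsLocalizedModule T φ]
    [Module.Finite R F] (hQ : Q.asIdeal = q.asIdeal.comap (algebraMap R C))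
    (hQF : Q ∈ Module.support R F) :
    heightAt R F Q ≤ (depthAt R F Q : WithBot ℕ∞) := by
  obtain ⟨e, he⟩ := exists_addEquiv_localizedModule hC hT φ hQ
  have hf : Function.Surjective (Localization.localRingHom _ _ (algebraMap R C) hQ) :=
    (RingHom.surjectiveOnStalks_of_exists_div hC).localRingHom_surjective _ _ hQ
  have hqG : q ∈ Module.support C G := by
    have : Nontrivial (LocalizedModule Q.asIdeal.primeCompl F) := hQF
    exact e.symm.toEquiv.nontrivial
  have hdepth : depthAt C G q ≤ depthAt R F Q := by
    refine sSup_le ?_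
    rintro _ ⟨ss, rfl, hmem, hreg⟩
    exact (natCast_le_depthAt_iff hQF).mpr
      (exists_isWeaklyRegular_of_surjective_of_addEquiv hf he hmem hreg.toIsWeaklyRegular)
  calc heightAt R F Q ≤ heightAt C G q := supportDim_le_of_surjective_of_addEquiv hf he
    _ = depthAt C G q := (hG q hqG).symm
    _ ≤ depthAt R F Q := by exact_mod_cast hdepth

end LocalizationTransport

section Fiber

theorem exists_comap_eq_of_disjoint {R : Type*} [CommRing R] {T : Submonoid R} {I : Ideal R}
    {Q : PrimeSpectrum R} (hdisj : Disjoint (T : Set R) Q.asIdeal) (hIQ : I ≤ Q.asIdeal) :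
    ∃ q : PrimeSpectrum (Localization T ⧸ I.map (algebraMap R (Localization T))),
      PrimeSpectrum.comap (algebraMap R (Localization T ⧸ I.map (algebraMap R _))) q = Q := by
  obtain ⟨q', rfl⟩ : Q ∈ Set.range (PrimeSpectrum.comap (algebraMap R (Localization T))) := by
    rwa [PrimeSpectrum.localization_comap_range _ T]
  obtain ⟨q, rfl⟩ : q' ∈ Set.range (PrimeSpectrum.comap
      (Ideal.Quotient.mk (I.map (algebraMap R (Localization T))))) := by
    rw [range_comap_of_surjective _ _ Ideal.Quotient.mk_surjective, Ideal.mk_ker]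
    exact Ideal.map_le_iff_le_comap.mpr hIQ
  exact ⟨q, rfl⟩

theorem exists_isUnit_algebraMap_mul_eq {R : Type*} [CommRing R] {T : Submonoid R}
    (J : Ideal (Localization T)) (c : Localization T ⧸ J) :
    ∃ b t : R, IsUnit (algebraMap R (Localization T ⧸ J) t) ∧
      algebraMap R (Localization T ⧸ J) t * c = algebraMap R (Localization T ⧸ J) b := by
  obtain ⟨c, rfl⟩ := Ideal.Quotient.mk_surjective c
  obtain ⟨⟨b, t⟩, hbt⟩ := IsLocalization.surj T c
  refine ⟨b, t, (IsLocalization.map_units (Localization T) t).map (Ideal.Quotient.mk J), ?_⟩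
  exact congrArg (Ideal.Quotient.mk J) ((mul_comm _ _).trans hbt)

theorem le_of_mem_support_quotient_smul_top {R : Type*} [CommRing R] {X : Type*} [AddCommGroup X]
    [Module R X] {I : Ideal R} {Q : PrimeSpectrum R}
    (hQ : Q ∈ Module.support R (X ⧸ (I • ⊤ : Submodule R X))) : I ≤ Q.asIdeal := by
  obtain ⟨x, hx⟩ := Module.mem_support_iff_exists_annihilator.mp hQ
  refine le_trans (fun r hr ↦ ?_) hx
  obtain ⟨x, rfl⟩ := Submodule.Quotient.mk_surjective _ x
  rw [Submodule.mem_annihilator_span_singleton, ← Submodule.Quotient.mk_smul,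
    Submodule.Quotient.mk_eq_zero]
  exact Submodule.smul_mem_smul hr trivial

theorem heightAt_le_depthAt_of_isCMModule_localizedModule {R : Type u} [CommRing R]
    {T : Submonoid R} {I : Ideal R} {X : Type v} [AddCommGroup X] [Module R X] [Module.Finite R X]
    (h : IsCMModule (Localization T ⧸ I.map (algebraMap R (Localization T)))
      (LocalizedModule T X ⧸ (I.map (algebraMap R (Localization T)) •
        (⊤ : Submodule (Localization T) (LocalizedModule T X)))))
    {Q : PrimeSpectrum R} (hdisj : Disjoint (T : Set R) Q.asIdeal)
    (hQ : Q ∈ Module.support R (X ⧸ (I • ⊤ : Submodule R X))) :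
    heightAt R (X ⧸ (I • ⊤ : Submodule R X)) Q ≤
      (depthAt R (X ⧸ (I • ⊤ : Submodule R X)) Q : WithBot ℕ∞) := by
  let e := (localizedModuleQuotientEquiv X T I).restrictScalars R
  have : IsLocalizedModule T (e.toLinearMap ∘ₗ LocalizedModule.mkLinearMap T _) :=
    IsLocalizedModule.of_linearEquiv T (LocalizedModule.mkLinearMap T _) e
  obtain ⟨q, hq⟩ := exists_comap_eq_of_disjoint hdisj (le_of_mem_support_quotient_smul_top hQ)
  exact h.heightAt_le_depthAt_of_isLocalizedModule (exists_isUnit_algebraMap_mul_eq _)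
    (fun t ht ↦ (IsLocalization.map_units (Localization T) (⟨t, ht⟩ : T)).map
      (Ideal.Quotient.mk (I.map (algebraMap R (Localization T)))))
    (e.toLinearMap ∘ₗ LocalizedModule.mkLinearMap T _) (congrArg (·.asIdeal) hq.symm) hQ

theorem heightAt_le_depthAt_of_isCMModule_fiberModule {R S : Type u} [CommRing R] [CommRing S]
    [Algebra R S] {N : Type u} [AddCommGroup N] [Module S N] [Module.Finite S N]
    {P : PrimeSpectrum R} (h : IsCMModule (fiberRing R S P) (fiberModule R S P N))
    {Q : PrimeSpectrum S} (hQP : PrimeSpectrum.comap (algebraMap R S) Q = P)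
    (hQ : Q ∈ Module.support S (N ⧸ (P.asIdeal.map (algebraMap R S) • ⊤ : Submodule S N))) :
    heightAt S (N ⧸ (P.asIdeal.map (algebraMap R S) • ⊤ : Submodule S N)) Q ≤
      (depthAt S (N ⧸ (P.asIdeal.map (algebraMap R S) • ⊤ : Submodule S N)) Q : WithBot ℕ∞) := by
  have hideal : (P.asIdeal.map (algebraMap R S)).map (algebraMap S _) = fiberIdeal R S P :=
    Ideal.map_map _ _
  refine heightAt_le_depthAt_of_isCMModule_localizedModule (T := fiberSubmonoid R S P)
    (by rw [hideal]; exact h) (Set.disjoint_left.mpr ?_) hQ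
  rintro _ ⟨a, ha, rfl⟩ haQ
  exact ha (hQP ▸ haQ)

end Fiber

section FlatTensor

open RingTheory.Sequence Pointwise IsLocalRing

variable {R : Type u} [CommRing R] {S : Type v} [CommRing S] [Algebra R S]
  {N : Type w} [AddCommGroup N] [Module R N] [Module S N] [IsScalarTower R S N]

section

variable {M : Type*} [AddCommGroup M] [Module R M]

theorem ker_rTensor_mkQ_pointwise_smul_top (y : S) :
    LinearMap.ker (AlgebraTensorModule.rTensor R M (y • ⊤ : Submodule S N).mkQ) =
      y • (⊤ : Submodule S (N ⊗[R] M)) := by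
  have hexact : Function.Exact ((LinearMap.lsmul S N y).restrictScalars R)
      ((y • ⊤ : Submodule S N).mkQ.restrictScalars R) := by
    intro n
    simp [Submodule.mem_smul_pointwise_iff_exists]
  ext x
  rw [LinearMap.mem_ker, Submodule.mem_smul_pointwise_iff_exists]
  simp only [Submodule.mem_top, true_and]
  exact rTensor_exact M hexact (Submodule.mkQ_surjective (y • ⊤ : Submodule S N)) x

/-- Tensoring with `M` commutes with reduction of the left factor modulo an element `y`. -/
def quotSMulTopTensorEquiv (N : Type w) [AddCommGroup N] [Module R N] [Module S N]
    [IsScalarTower R S N] (y : S) (M : Type*) [AddCommGroup M] [Module R M] :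
    QuotSMulTop y (N ⊗[R] M) ≃ₗ[S] QuotSMulTop y N ⊗[R] M :=
  Submodule.quotEquivOfEq _ _ (ker_rTensor_mkQ_pointwise_smul_top y).symm ≪≫ₗ
    LinearMap.quotKerEquivOfSurjective _
      (LinearMap.rTensor_surjective M
        (g := (y • ⊤ : Submodule S N).mkQ.restrictScalars R)
        (Submodule.mkQ_surjective (y • ⊤ : Submodule S N)))

theorem tmul_mem_map_smul_top (I : Ideal R) (n : N) {m : M} (hm : m ∈ (I • ⊤ : Submodule R M)) :
    n ⊗ₜ[R] m ∈ I.map (algebraMap R S) • (⊤ : Submodule S (N ⊗[R] M)) := by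
  induction hm using Submodule.smul_induction_on' with
  | smul r hr m _ =>
    rw [tmul_smul, ← algebraMap_smul S r (n ⊗ₜ[R] m)]
    exact Submodule.smul_mem_smul (Ideal.mem_map_of_mem _ hr) Submodule.mem_top
  | add m _ m' _ hm hm' =>
    rw [tmul_add]
    exact add_mem hm hm'

theorem annihilator_le_annihilator_tensor :
    Module.annihilator S N ≤ Module.annihilator S (N ⊗[R] M) := by
  intro s hs
  rw [Module.mem_annihilator] at hs ⊢
  intro x
  induction x with
  | zero => exact smul_zero s
  | tmul n m => rw [smul_tmul', hs, zero_tmul]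
  | add x y hx hy => rw [smul_add, hx, hy, add_zero]

theorem map_annihilator_le_annihilator_tensor :
    (Module.annihilator R M).map (algebraMap R S) ≤ Module.annihilator S (N ⊗[R] M) := by
  rw [Ideal.map_le_iff_le_comap]
  intro r hr
  rw [Ideal.mem_comap, Module.mem_annihilator]
  intro x
  rw [algebraMap_smul]
  induction x with
  | zero => exact smul_zero r
  | tmul n m => rw [← tmul_smul, Module.mem_annihilator.mp hr, tmul_zero]
  | add x y hx hy => rw [smul_add, hx, hy, add_zero]

theorem le_annihilator_quotient_smul_top (I : Ideal R) :
    I ≤ Module.annihilator R (M ⧸ (I • ⊤ : Submodule R M)) := by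
  rw [Submodule.annihilator_quotient]
  exact fun a ha ↦ Submodule.mem_colon.mpr fun m _ ↦
    Submodule.smul_mem_smul ha Submodule.mem_top

theorem ker_lTensor_mkQ_smul_top (I : Ideal R) :
    LinearMap.ker (AlgebraTensorModule.lTensor S N (I • ⊤ : Submodule R M).mkQ) =
      I.map (algebraMap R S) • (⊤ : Submodule S (N ⊗[R] M)) := by
  apply le_antisymm
  · intro x hx
    obtain ⟨z, rfl⟩ := (lTensor_exact N (LinearMap.exact_subtype_mkQ _)
      (Submodule.mkQ_surjective _) x).mp hx
    clear hx
    induction z with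
    | zero => rw [map_zero]; exact zero_mem _
    | tmul n m => exact tmul_mem_map_smul_top I n m.2
    | add z z' hz hz' => rw [map_add]; exact add_mem hz hz'
  · refine Submodule.smul_le.mpr fun s hs x _ ↦ ?_
    rw [LinearMap.mem_ker, map_smul]
    exact Module.mem_annihilator.mp
      (map_annihilator_le_annihilator_tensor
        (Ideal.map_mono (le_annihilator_quotient_smul_top I) hs)) _

/-- Tensoring with `N` commutes with reduction of the right factor modulo an ideal `I`. -/
def quotientMapSMulTensorEquiv (N : Type w) [AddCommGroup N] [Module R N] [Module S N]
    [IsScalarTower R S N] (I : Ideal R) (M : Type*) [AddCommGroup M] [Module R M] :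
    ((N ⊗[R] M) ⧸ (I.map (algebraMap R S) • ⊤ : Submodule S (N ⊗[R] M))) ≃ₗ[S]
      N ⊗[R] (M ⧸ (I • ⊤ : Submodule R M)) :=
  Submodule.quotEquivOfEq _ _ (ker_lTensor_mkQ_smul_top I).symm ≪≫ₗ
    LinearMap.quotKerEquivOfSurjective _
      (LinearMap.lTensor_surjective N (Submodule.mkQ_surjective (I • ⊤ : Submodule R M)))

/-- `N / IN ≃ N ⊗ R / I`, linearly over an algebra `S` acting on `N`. -/
def quotientMapSMulEquivTensor (N : Type w) [AddCommGroup N] [Module R N] [Module S N]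
    [IsScalarTower R S N] (I : Ideal R) :
    (N ⧸ (I.map (algebraMap R S) • ⊤ : Submodule S N)) ≃ₗ[S] N ⊗[R] (R ⧸ I) :=
  Submodule.Quotient.equiv _ _ (AlgebraTensorModule.rid R S N).symm (by
      rw [Submodule.map_smul'', Submodule.map_top, LinearEquiv.range]) ≪≫ₗ
    quotientMapSMulTensorEquiv N I R ≪≫ₗ
      AlgebraTensorModule.congr (LinearEquiv.refl S N)
        (Submodule.quotEquivOfEq _ _ (by rw [smul_eq_mul, Ideal.mul_top]))

theorem isSMulRegular_tensor_of_exact [Module.Flat R N] {M₁ M₂ M₃ : Type*} [AddCommGroup M₁]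
    [Module R M₁] [AddCommGroup M₂] [Module R M₂] [AddCommGroup M₃] [Module R M₃]
    {f : M₁ →ₗ[R] M₂} {g : M₂ →ₗ[R] M₃} (hf : Function.Injective f)
    (hg : Function.Surjective g) (hfg : Function.Exact f g) {y : S}
    (h₁ : IsSMulRegular (N ⊗[R] M₁) y) (h₃ : IsSMulRegular (N ⊗[R] M₃) y) :
    IsSMulRegular (N ⊗[R] M₂) y := by
  refine isSMulRegular_of_range_eq_ker (f := AlgebraTensorModule.lTensor S N f)
    (g := AlgebraTensorModule.lTensor S N g)
    (Module.Flat.lTensor_preserves_injective_linearMap f hf) ?_ h₁ h₃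
  ext x
  exact (lTensor_exact N hfg hg x).symm

theorem finite_tensor [Module.Finite S N] [Module.Finite R M] : Module.Finite S (N ⊗[R] M) :=
  Module.Finite.equiv (AlgebraTensorModule.cancelBaseChange R S S N M)

end

theorem subsingleton_tensor_quotient {I : Ideal R} {a : R} (ha : a ∈ I)
    (hu : IsUnit (algebraMap R S a)) : Subsingleton (N ⊗[R] (R ⧸ I)) := by
  refine (quotientMapSMulEquivTensor (S := S) N I).symm.toEquiv.subsingleton_congr.mpr ?_
  rw [Ideal.eq_top_of_isUnit_mem _ (Ideal.mem_map_of_mem _ ha) hu, Submodule.top_smul]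
  infer_instance

theorem isSMulRegular_tensor_of_pow_le_annihilator [Module.Flat R N] [IsNoetherianRing R]
    [IsLocalRing S] {P : Ideal R} (hP : (maximalIdeal S).comap (algebraMap R S) = P) {y : S}
    (hy : IsSMulRegular (N ⊗[R] (R ⧸ P)) y) (M : Type u) [AddCommGroup M] [Module R M]
    [Module.Finite R M] {n : ℕ} (hM : P ^ n ≤ Module.annihilator R M) :
    IsSMulRegular (N ⊗[R] M) y := by
  -- A prime `p` strictly containing `P` contains an element that is a unit in `S`,
  -- so that only the factors `R ⧸ P` of a prime filtration of `M` survive tensoring with `N`.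
  induction ‹Module.Finite R M› using
    IsNoetherianRing.induction_on_isQuotientEquivQuotientPrime R with
  | subsingleton M => exact Function.injective_of_subsingleton _
  | quotient M p e =>
    rw [(AlgebraTensorModule.congr (LinearEquiv.refl S N) e).isSMulRegular_congr]
    have hle : P ≤ p.asIdeal := by
      rw [e.annihilator_eq, Ideal.annihilator_quotient] at hM
      exact p.2.le_of_pow_le hM
    obtain heq | hlt := hle.eq_or_lt
    · rwa [← heq]
    · obtain ⟨a, hap, haP⟩ := SetLike.exists_of_lt hlt
      have ha : IsUnit (algebraMap R S a) := by
        rwa [← hP, Ideal.mem_comap, mem_maximalIdeal, mem_nonunits_iff, not_not] at haP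
      have := subsingleton_tensor_quotient (N := N) hap ha
      exact Function.injective_of_subsingleton _
  | exact M₁ M₂ M₃ f g hf hg hfg h₁ h₃ =>
    exact isSMulRegular_tensor_of_exact hf hg hfg
      (h₁ (hM.trans (f.annihilator_le_of_injective hf)))
      (h₃ (hM.trans (g.annihilator_le_of_surjective hg)))

theorem isSMulRegular_tensor_of_isLocalRing [Module.Flat R N] [IsNoetherianRing R]
    [IsLocalRing S] [IsNoetherianRing S] [Module.Finite S N] {P : Ideal R}
    (hP : (maximalIdeal S).comap (algebraMap R S) = P) {y : S}
    (hy : IsSMulRegular (N ⊗[R] (R ⧸ P)) y) (M : Type u) [AddCommGroup M] [Module R M]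
    [Module.Finite R M] : IsSMulRegular (N ⊗[R] M) y := by
  -- By Krull's intersection theorem it is enough to argue modulo the powers of `P`.
  rw [isSMulRegular_iff_right_eq_zero_of_smul]
  intro x hx
  have := finite_tensor (R := R) (S := S) (N := N) (M := M)
  rw [← Submodule.mem_bot S, ← Ideal.iInf_pow_smul_eq_bot_of_isLocalRing (maximalIdeal S)
    Ideal.IsPrime.ne_top', Submodule.mem_iInf]
  intro n
  have hreg : IsSMulRegular (N ⊗[R] (M ⧸ (P ^ n • ⊤ : Submodule R M))) y :=
    isSMulRegular_tensor_of_pow_le_annihilator hP hy _ (le_annihilator_quotient_smul_top _)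
  have hker : x ∈ LinearMap.ker
      (AlgebraTensorModule.lTensor S N (P ^ n • ⊤ : Submodule R M).mkQ) :=
    hreg.right_eq_zero_of_smul (by rw [← map_smul, hx, map_zero])
  rw [ker_lTensor_mkQ_smul_top, Ideal.map_pow] at hker
  exact Submodule.smul_mono_left
    (Ideal.pow_right_mono (Ideal.map_le_iff_le_comap.mpr hP.ge) n) hker

theorem flat_quotSMulTop [Module.Flat R N] {y : S}
    (hy : ∀ I : Ideal R, I.FG → IsSMulRegular (N ⊗[R] (R ⧸ I)) y) :
    Module.Flat R (QuotSMulTop y N) := by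
  rw [Module.Flat.iff_lTensor_injective]
  intro I hI
  rw [injective_iff_map_eq_zero]
  intro z hz
  have mkQ_eq_zero_iff {L : Type u} [AddCommGroup L] [Module R L] (x : N ⊗[R] L) :
      AlgebraTensorModule.rTensor R L (y • ⊤ : Submodule S N).mkQ x = 0 ↔ ∃ t, y • t = x := by
    rw [← LinearMap.mem_ker, ker_rTensor_mkQ_pointwise_smul_top,
      Submodule.mem_smul_pointwise_iff_exists]
    simp only [Submodule.mem_top, true_and]
  obtain ⟨w, rfl⟩ := LinearMap.rTensor_surjective I
    (g := (y • ⊤ : Submodule S N).mkQ.restrictScalars R)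
    (Submodule.mkQ_surjective (y • ⊤ : Submodule S N)) z
  rw [← LinearMap.comp_apply, LinearMap.lTensor_comp_rTensor, ← LinearMap.rTensor_comp_lTensor,
    LinearMap.comp_apply] at hz
  obtain ⟨v, hv⟩ := (mkQ_eq_zero_iff _).mp hz
  have hexact := lTensor_exact N (LinearMap.exact_subtype_mkQ I) I.mkQ_surjective
  obtain ⟨t, rfl⟩ : ∃ t, I.subtype.lTensor N t = v := by
    refine (hexact v).mp ((hy I hI).right_eq_zero_of_smul ?_)
    exact ((AlgebraTensorModule.lTensor S N I.mkQ).map_smul y v).symm.trans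
      ((congr_arg _ hv).trans ((hexact _).mpr ⟨w, rfl⟩))
  refine (mkQ_eq_zero_iff w).mpr ⟨t, ?_⟩
  refine Module.Flat.lTensor_preserves_injective_linearMap I.subtype I.injective_subtype ?_
  exact ((AlgebraTensorModule.lTensor S N I.subtype).map_smul y t).trans hv

theorem isWeaklyRegular_tensor_of_isLocalRing [Module.Flat R N] [IsNoetherianRing R]
    [IsLocalRing S] [IsNoetherianRing S] [Module.Finite S N] {P : Ideal R}
    (hP : (maximalIdeal S).comap (algebraMap R S) = P) {ys : List S}
    (hys : IsWeaklyRegular (N ⊗[R] (R ⧸ P)) ys) (M : Type u) [AddCommGroup M] [Module R M]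
    [Module.Finite R M] : IsWeaklyRegular (N ⊗[R] M) ys := by
  induction ys generalizing N with
  | nil => exact IsWeaklyRegular.nil _ _
  | cons y ys ih =>
    rw [isWeaklyRegular_cons_iff] at hys ⊢
    refine ⟨isSMulRegular_tensor_of_isLocalRing hP hys.1 M, ?_⟩
    rw [(quotSMulTopTensorEquiv N y M).isWeaklyRegular_congr]
    have : Module.Flat R (QuotSMulTop y N) :=
      flat_quotSMulTop fun I _ ↦ isSMulRegular_tensor_of_isLocalRing hP hys.1 (R ⧸ I)
    exact ih ((quotSMulTopTensorEquiv N y (R ⧸ P)).isWeaklyRegular_congr _ |>.mp hys.2)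

theorem isWeaklyRegular_tensor_map_append [Module.Flat R N] {M : Type*} [AddCommGroup M]
    [Module R M] {rs : List R} (hrs : IsWeaklyRegular M rs) {ys : List S}
    (hys : IsWeaklyRegular (N ⊗[R] (M ⧸ (Ideal.ofList rs • ⊤ : Submodule R M))) ys) :
    IsWeaklyRegular (N ⊗[R] M) (rs.map (algebraMap R S) ++ ys) := by
  rw [isWeaklyRegular_append_iff, isWeaklyRegular_map_algebraMap_iff, ← Ideal.map_ofList,
    (quotientMapSMulTensorEquiv N (Ideal.ofList rs) M).isWeaklyRegular_congr]
  exact ⟨hrs.isWeaklyRegular_lTensor, hys⟩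

end FlatTensor

section FlatDepth

open RingTheory.Sequence

variable {R : Type u} [CommRing R] {S : Type v} [CommRing S] [Algebra R S]
  {N : Type w} [AddCommGroup N] [Module R N] [Module S N] [IsScalarTower R S N]

/-- Localization on the left factor commutes with tensoring. -/
def localizedModuleTensorEquiv (T : Submonoid S) (N : Type w) [AddCommGroup N] [Module R N]
    [Module S N] [IsScalarTower R S N] (M : Type*) [AddCommGroup M] [Module R M] :
    LocalizedModule T (N ⊗[R] M) ≃ₗ[Localization T] LocalizedModule T N ⊗[R] M :=
  LinearEquiv.extendScalarsOfIsLocalization T (Localization T)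
    (IsLocalizedModule.linearEquiv T (LocalizedModule.mkLinearMap T (N ⊗[R] M))
      (AlgebraTensorModule.rTensor R M (LocalizedModule.mkLinearMap T N)))

theorem flat_localizedModule [Module.Flat R N] (T : Submonoid S) :
    Module.Flat R (LocalizedModule T N) := by
  rw [Module.Flat.iff_lTensor_injective]
  intro I _
  have hinj := IsLocalizedModule.map_injective T
    (AlgebraTensorModule.rTensor R I (LocalizedModule.mkLinearMap T N))
    (AlgebraTensorModule.rTensor R R (LocalizedModule.mkLinearMap T N))
    (AlgebraTensorModule.lTensor S N I.subtype)
    (Module.Flat.lTensor_preserves_injective_linearMap I.subtype I.injective_subtype)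
  rwa [IsLocalizedModule.map_lTensor] at hinj

theorem comap_maximalIdeal_localization_atPrime (Q : PrimeSpectrum S) :
    (IsLocalRing.maximalIdeal (Localization.AtPrime Q.asIdeal)).comap
      (algebraMap R (Localization.AtPrime Q.asIdeal)) = Q.asIdeal.comap (algebraMap R S) := by
  rw [IsScalarTower.algebraMap_eq R S, ← Ideal.comap_comap]
  exact congr_arg (Ideal.comap (algebraMap R S)) Localization.AtPrime.under_maximalIdeal

theorem idealDepth_add_depthAt_le_depthAt [IsNoetherianRing R] [IsNoetherianRing S]
    [Module.Flat R N] [Module.Finite S N] {M : Type u} [AddCommGroup M] [Module R M]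
    [Module.Finite R M] {P : PrimeSpectrum R} {Q : PrimeSpectrum S}
    (hQP : PrimeSpectrum.comap (algebraMap R S) Q = P) (hP : P ∈ Module.support R M)
    (hQ : Q ∈ Module.support S (N ⧸ (P.asIdeal.map (algebraMap R S) • ⊤ : Submodule S N)))
    (hX : Q ∈ Module.support S (N ⊗[R] M)) :
    idealDepth R P.asIdeal M +
        depthAt S (N ⧸ (P.asIdeal.map (algebraMap R S) • ⊤ : Submodule S N)) Q ≤
      depthAt S (N ⊗[R] M) Q := by
  have := finite_tensor (R := R) (S := S) (N := N) (M := M)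
  have := finite_tensor (R := R) (S := S) (N := N) (M := R ⧸ P.asIdeal)
  rw [(quotientMapSMulEquivTensor N P.asIdeal).support_eq] at hQ
  rw [depthAt_congr (quotientMapSMulEquivTensor N P.asIdeal)]
  obtain ⟨m, hm⟩ := ENat.ne_top_iff_exists.mp
    (ne_top_of_le_ne_top (depthAt_ne_top hP) (idealDepth_le_depthAt hP))
  obtain ⟨n, hn⟩ := ENat.ne_top_iff_exists.mp (depthAt_ne_top hQ)
  obtain ⟨rs, rfl, hrs_mem, hrs⟩ :=
    (natCast_le_idealDepth_iff (smul_top_ne_top_of_mem_support hP)).mp hm.le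
  obtain ⟨ys, rfl, hys_mem, hys⟩ := (natCast_le_depthAt_iff hQ).mp hn.le
  have hcomap := (comap_maximalIdeal_localization_atPrime (R := R) Q).trans
    (congr_arg PrimeSpectrum.asIdeal hQP)
  have hflat := flat_localizedModule (R := R) (N := N) Q.asIdeal.primeCompl
  have hfiber :
      IsWeaklyRegular (LocalizedModule Q.asIdeal.primeCompl N ⊗[R] (R ⧸ P.asIdeal)) ys :=
    (LinearEquiv.isWeaklyRegular_congr
      (localizedModuleTensorEquiv Q.asIdeal.primeCompl N _) ys).mp hys
  rw [← hm, ← hn, ← Nat.cast_add, natCast_le_depthAt_iff hX]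
  refine ⟨rs.map (algebraMap R (Localization.AtPrime Q.asIdeal)) ++ ys, by simp, ?_, ?_⟩
  · rw [List.forall_mem_append, List.forall_mem_map]
    exact ⟨fun r hr ↦ Ideal.mem_comap.mp (hcomap ▸ hrs_mem r hr), hys_mem⟩
  · rw [(localizedModuleTensorEquiv Q.asIdeal.primeCompl N M).isWeaklyRegular_congr]
    exact isWeaklyRegular_tensor_map_append hrs
      (isWeaklyRegular_tensor_of_isLocalRing hcomap hfiber _)

end FlatDepth

section Tensor

theorem isAlmostCMModule_congr {R : Type u} [CommRing R] {X : Type v} [AddCommGroup X]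
    [Module R X] {Y : Type w} [AddCommGroup Y] [Module R Y] (e : X ≃ₗ[R] Y) :
    IsAlmostCMModule R X ↔ IsAlmostCMModule R Y := by
  simp only [IsAlmostCMModule, e.support_eq, idealDepth_congr e, depthAt_congr e]

/-- The symmetry of the tensor product as an additive map. In the common universe of
`tensorRightModule` that instance shadows the base ring action which `TensorProduct.comm` is
linear over, so `M` and `N` live in different universes here. -/
def tensorCommAddEquiv (R : Type u) [CommRing R] (M : Type v) [AddCommGroup M] [Module R M]
    (N : Type w) [AddCommGroup N] [Module R N] : M ⊗[R] N ≃+ N ⊗[R] M :=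
  (TensorProduct.comm R M N).toAddEquiv

/-- The symmetry of the tensor product, linear over the algebra `S` acting on `N`. -/
def tensorRightModuleCommEquiv {R S : Type u} [CommRing R] [CommRing S] [Algebra R S]
    (M : Type u) [AddCommGroup M] [Module R M]
    (N : Type u) [AddCommGroup N] [Module R N] [Module S N] [IsScalarTower R S N] :
    (M ⊗[R] N) ≃ₗ[S] N ⊗[R] M where
  __ := tensorCommAddEquiv R M N
  map_smul' _ _ := (tensorCommAddEquiv R M N).apply_symm_apply _

section

variable {R : Type u} [CommRing R] {S : Type v} [CommRing S] [Algebra R S]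
  {N : Type w} [AddCommGroup N] [Module S N] [Module.Finite S N]

theorem support_tensor_subset [Module R N] [IsScalarTower R S N] {M : Type*} [AddCommGroup M]
    [Module R M] [Module.Finite R M] :
    Module.support S (N ⊗[R] M) ⊆ Module.support S N ∩
      PrimeSpectrum.comap (algebraMap R S) ⁻¹' Module.support R M := by
  intro Q hQ
  have hann := Module.annihilator_le_of_mem_support hQ
  rw [Set.mem_inter_iff, Set.mem_preimage, Module.mem_support_iff_of_finite,
    Module.mem_support_iff_of_finite]
  exact ⟨annihilator_le_annihilator_tensor.trans hann,
    Ideal.map_le_iff_le_comap.mp (map_annihilator_le_annihilator_tensor.trans hann)⟩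

theorem mem_support_quotient_map_smul_top {Q : PrimeSpectrum S} (hQ : Q ∈ Module.support S N)
    {P : PrimeSpectrum R} (hQP : PrimeSpectrum.comap (algebraMap R S) Q = P) :
    Q ∈ Module.support S (N ⧸ (P.asIdeal.map (algebraMap R S) • ⊤ : Submodule S N)) := by
  rw [Module.support_quotient]
  exact ⟨hQ, Ideal.map_le_iff_le_comap.mpr (congr_arg PrimeSpectrum.asIdeal hQP).ge⟩

end

theorem isAlmostCMModule_tensor {R S : Type u} [CommRing R] [CommRing S] [IsNoetherianRing R]
    [IsNoetherianRing S] [Algebra R S] {M : Type u} [AddCommGroup M] [Module R M]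
    [Module.Finite R M] {N : Type u} [AddCommGroup N] [Module R N] [Module S N]
    [IsScalarTower R S N] [Module.Finite S N] [Module.Flat R N] (hM : IsAlmostCMModule R M)
    (hfib : ∀ P ∈ Module.support R M, IsCMModule (fiberRing R S P) (fiberModule R S P N)) :
    IsAlmostCMModule S (N ⊗[R] M) := by
  have := finite_tensor (R := R) (S := S) (N := N) (M := M)
  refine isAlmostCMModule_iff_heightAt_le.mpr fun Q hQ ↦ ?_
  obtain ⟨P, hQP⟩ : ∃ P, PrimeSpectrum.comap (algebraMap R S) Q = P := ⟨_, rfl⟩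
  obtain ⟨hQN, hP⟩ := support_tensor_subset (R := R) hQ
  rw [Set.mem_preimage, hQP] at hP
  have hQF := mem_support_quotient_map_smul_top hQN hQP
  have hdepth := idealDepth_add_depthAt_le_depthAt hQP hP hQF hQ
  rw [hM P hP] at hdepth
  set F := N ⧸ (P.asIdeal.map (algebraMap R S) • ⊤ : Submodule S N)
  calc heightAt S (N ⊗[R] M) Q
      ≤ heightAt R M P + heightAt S F Q :=
        heightAt_le_heightAt_add_heightAt support_tensor_subset hQ hQP
    _ ≤ ((depthAt R M P : WithBot ℕ∞) + 1) + depthAt S F Q :=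
        add_le_add (hM.heightAt_le hP)
          (heightAt_le_depthAt_of_isCMModule_fiberModule (hfib P hP) hQP hQF)
    _ = ((depthAt R M P + depthAt S F Q : ℕ∞) : WithBot ℕ∞) + 1 := by
        push_cast
        rw [add_right_comm]
    _ ≤ (depthAt S (N ⊗[R] M) Q : WithBot ℕ∞) + 1 := by
        gcongr
        exact WithBot.coe_le_coe.mpr hdepth

end Tensor

theorem tensor_almostCM_of_almostCM_base_CM_fibers (A B : Type u) [CommRing A] [CommRing B] [IsNoetherianRing A] [IsNoetherianRing B]
    [Algebra A B]
    (M : Type u) [AddCommGroup M] [Module A M] [Module.Finite A M]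
    (N : Type u) [AddCommGroup N] [Module A N] [Module B N] [IsScalarTower A B N]
    [Module.Finite B N] [Module.Flat A N]
    (hM : IsAlmostCMModule A M)
    (hfib : ∀ P ∈ Module.support A M, IsCMModule (fiberRing A B P) (fiberModule A B P N)) :
    IsAlmostCMModule B (M ⊗[A] N) := by
  exact (isAlmostCMModule_congr (tensorRightModuleCommEquiv M N)).mpr
    (isAlmostCMModule_tensor hM hfib)

end
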